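/- Every weakly chordal graph that is not a complete graph contains a two-pair. -/

import Mathlib

open SimpleGraph

/-- `G` has an induced (chordless) cycle of length `n`. -/
def HasInducedCycle {V : Type*} (G : SimpleGraph V) (n : ℕ) : Prop :=
  Nonempty (SimpleGraph.cycleGraph n ↪g G)

/-- `G` is chordal: it has no induced cycle of length 4 or more. -/
def Chordal {V : Type*} (G : SimpleGraph V) : Prop :=
  ∀ n, 4 ≤ n → ¬ HasInducedCycle G n

/-- `G` is weakly chordal: neither `G` nor its complement has an induced cycle
of length 5 or more. -/
def WeaklyChordal {V : Type*} (G : SimpleGraph V) : Prop :=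
  (∀ n, 5 ≤ n → ¬ HasInducedCycle G n) ∧ (∀ n, 5 ≤ n → ¬ HasInducedCycle Gᶜ n)

/-- `G` has an induced (chordless) path of length `ℓ` (i.e. with `ℓ` edges)
from `u` to `v`. -/
def HasInducedPath {V : Type*} (G : SimpleGraph V) (u v : V) (ℓ : ℕ) : Prop :=
  ∃ f : SimpleGraph.pathGraph (ℓ + 1) ↪g G, f 0 = u ∧ f (Fin.last ℓ) = v

/-- `{u, v}` is a two-pair of `G`: `u` and `v` are distinct, non-adjacent, and
every induced path between them has exactly two edges. -/
def TwoPair {V : Type*} (G : SimpleGraph V) (u v : V) : Prop :=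
  u ≠ v ∧ ¬ G.Adj u v ∧ ∀ ℓ, HasInducedPath G u v ℓ → ℓ = 2

namespace TwoPairProof

/-- `p 0, ..., p n` is an induced path. -/
structure IndPath {V : Type*} (G : SimpleGraph V) (p : ℕ → V) (n : ℕ) : Prop where
  ne : ∀ i j, i < j → j ≤ n → p i ≠ p j
  adj : ∀ i j, i < j → j ≤ n → (G.Adj (p i) (p j) ↔ j = i + 1)

/-- no induced cycle of length at least five -/
def NoHole {V : Type*} (G : SimpleGraph V) : Prop := ∀ n, 5 ≤ n → ¬ HasInducedCycle G n

/-- `C` is connected in `G` -/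
def Conn {V : Type*} (G : SimpleGraph V) (C : Set V) : Prop :=
  ∀ u ∈ C, ∀ v ∈ C, Relation.ReflTransGen (fun a b => G.Adj a b ∧ b ∈ C) u v

variable {V : Type*} {G : SimpleGraph V}

lemma NoHole.elim (h : NoHole G) (c : ℕ → V) (n : ℕ) (hn : 5 ≤ n)
    (hne : ∀ i j, i < j → j < n → c i ≠ c j)
    (hadj : ∀ i j, i < j → j < n → (G.Adj (c i) (c j) ↔ j = i + 1 ∨ (i = 0 ∧ j + 1 = n))) :
    False := by
  refine h n hn ⟨⟨⟨fun i => c i, ?_⟩, ?_⟩⟩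
  · intro i j hij
    rcases lt_trichotomy i j with h1 | h1 | h1
    · exact (hne i j h1 j.2 hij).elim
    · exact h1
    · exact (hne j i h1 i.2 hij.symm).elim
  · intro i j
    have key : ∀ i j : Fin n, i < j →
        (G.Adj (c i) (c j) ↔ (cycleGraph n).Adj i j) := by
      intro i j hij
      rw [hadj i j hij j.2, cycleGraph_adj']
      have hi := i.2
      have hj := j.2
      have hij' : i.val < j.val := hij
      have e1 : (j - i).val = j.val - i.val := Fin.sub_val_of_le hij.le
      have e2 : (i - j).val = n - (j.val - i.val) := by
        rw [Fin.val_sub]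
        rw [Nat.mod_eq_of_lt (by omega)]
        omega
      rw [e1, e2]
      omega
    rcases lt_trichotomy i j with h1 | h1 | h1
    · exact key i j h1
    · subst h1; simp
    · have := key j i h1
      rw [G.adj_comm, (cycleGraph n).adj_comm] at this
      exact this

lemma NoHole.glue (h : NoHole G) {p q : ℕ → V} {m k : ℕ} (hp : IndPath G p m)
    (hq : IndPath G q k) (h0 : p 0 = q 0) (h1 : p m = q k) (hm : 2 ≤ m) (hk : 2 ≤ k)
    (hmk : 5 ≤ m + k)
    (hne : ∀ i j, 0 < i → i < m → 0 < j → j < k → p i ≠ q j)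
    (hna : ∀ i j, 0 < i → i < m → 0 < j → j < k → ¬ G.Adj (p i) (q j)) : False := by
  refine h.elim (fun i => if i ≤ m then p i else q (m + k - i)) (m + k) hmk ?_ ?_
  · intro i j hij hj
    by_cases hjm : j ≤ m
    · have : i ≤ m := by omega
      simp only [hjm, this, if_true]
      exact hp.ne i j hij hjm
    · by_cases him : i ≤ m
      · simp only [hjm, him, if_true, if_false]
        rcases Nat.eq_zero_or_pos i with hi | hi
        · subst hi; rw [h0]; exact hq.ne _ _ (by omega) (by omega)
        · rcases him.lt_or_eq with hi2 | hi2
          · exact hne _ _ hi hi2 (by omega) (by omega)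
          · subst hi2; rw [h1]; exact (hq.ne _ _ (by omega) (by omega)).symm
      · simp only [hjm, him, if_false]
        exact (hq.ne _ _ (by omega) (by omega)).symm
  · intro i j hij hj
    by_cases hjm : j ≤ m
    · have : i ≤ m := by omega
      simp only [hjm, this, if_true]
      rw [hp.adj i j hij hjm]
      omega
    · by_cases him : i ≤ m
      · simp only [hjm, him, if_true, if_false]
        rcases Nat.eq_zero_or_pos i with hi | hi
        · subst hi; rw [h0, hq.adj _ _ (by omega) (by omega)]; omega
        · rcases him.lt_or_eq with hi2 | hi2
          · have := hna i (m + k - j) hi hi2 (by omega) (by omega)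
            simp only [this, false_iff]; omega
          · subst hi2; rw [h1, G.adj_comm, hq.adj _ _ (by omega) (by omega)]; omega
      · simp only [hjm, him, if_false]
        rw [G.adj_comm, hq.adj _ _ (by omega) (by omega)]; omega

lemma NoHole.close (h : NoHole G) {p : ℕ → V} {m : ℕ} (hp : IndPath G p m) (w : V)
    (hm : 3 ≤ m) (hne : ∀ i ≤ m, p i ≠ w)
    (ha : ∀ i ≤ m, (G.Adj (p i) w ↔ i = 0 ∨ i = m)) : False := by
  refine h.elim (fun i => if i ≤ m then p i else w) (m + 2) (by omega) ?_ ?_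
  · intro i j hij hj
    by_cases hjm : j ≤ m
    · have : i ≤ m := by omega
      simp only [hjm, this, if_true]
      exact hp.ne i j hij hjm
    · have him : i ≤ m := by omega
      simp only [hjm, him, if_true, if_false]
      exact hne i him
  · intro i j hij hj
    by_cases hjm : j ≤ m
    · have : i ≤ m := by omega
      simp only [hjm, this, if_true]
      rw [hp.adj i j hij hjm]; omega
    · have him : i ≤ m := by omega
      simp only [hjm, him, if_true, if_false]
      rw [ha i him]; omega

lemma IndPath.snoc {p : ℕ → V} {m : ℕ} (hp : IndPath G p m) (w : V)
    (hne : ∀ i ≤ m, p i ≠ w) (ha : ∀ i ≤ m, (G.Adj (p i) w ↔ i = m)) :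
    IndPath G (fun i => if i ≤ m then p i else w) (m + 1) := by
  constructor
  · intro i j hij hj
    by_cases hjm : j ≤ m
    · have : i ≤ m := by omega
      simp only [hjm, this, if_true]
      exact hp.ne i j hij hjm
    · have him : i ≤ m := by omega
      simp only [hjm, him, if_true, if_false]
      exact hne i him
  · intro i j hij hj
    by_cases hjm : j ≤ m
    · have : i ≤ m := by omega
      simp only [hjm, this, if_true]
      rw [hp.adj i j hij hjm]
    · have him : i ≤ m := by omega
      simp only [hjm, him, if_true, if_false]
      rw [ha i him]; omega

lemma IndPath.cons {p : ℕ → V} {m : ℕ} (hp : IndPath G p m) (w : V)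
    (hne : ∀ i ≤ m, p i ≠ w) (ha : ∀ i ≤ m, (G.Adj (p i) w ↔ i = 0)) :
    IndPath G (fun i => if i = 0 then w else p (i - 1)) (m + 1) := by
  constructor
  · intro i j hij hj
    have hj0 : j ≠ 0 := by omega
    by_cases hi : i = 0
    · simp only [hi, hj0, if_true, if_false]
      exact (hne _ (by omega)).symm
    · simp only [hi, hj0, if_false]
      exact hp.ne _ _ (by omega) (by omega)
  · intro i j hij hj
    have hj0 : j ≠ 0 := by omega
    by_cases hi : i = 0
    · simp only [hi, hj0, if_true, if_false]
      rw [G.adj_comm, ha _ (by omega)]; omega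
    · simp only [hi, hj0, if_false]
      rw [hp.adj _ _ (by omega) (by omega)]; omega

lemma IndPath.shift {p : ℕ → V} {m : ℕ} (hp : IndPath G p m) (a n : ℕ) (h : a + n ≤ m) :
    IndPath G (fun i => p (a + i)) n := by
  constructor
  · intro i j hij hj
    exact hp.ne _ _ (by omega) (by omega)
  · intro i j hij hj
    rw [hp.adj _ _ (by omega) (by omega)]; omega

lemma IndPath.take {p : ℕ → V} {m : ℕ} (hp : IndPath G p m) (n : ℕ) (h : n ≤ m) :
    IndPath G p n :=
  ⟨fun i j hij hj => hp.ne i j hij (hj.trans h), fun i j hij hj => hp.adj i j hij (hj.trans h)⟩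

lemma IndPath.conn {p : ℕ → V} {m : ℕ} (hp : IndPath G p m) : Conn G {v | ∃ i ≤ m, p i = v} := by
  have up : ∀ d i, i + d ≤ m → Relation.ReflTransGen
      (fun a b => G.Adj a b ∧ b ∈ {v | ∃ i ≤ m, p i = v}) (p i) (p (i + d)) := by
    intro d
    induction d with
    | zero => intro i _; exact .refl
    | succ d ih =>
      intro i hi
      refine (ih i (by omega)).tail ⟨?_, i + (d + 1), hi, rfl⟩
      exact (hp.adj _ _ (by omega) hi).2 (by omega)
  have down : ∀ d i, i + d ≤ m → Relation.ReflTransGen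
      (fun a b => G.Adj a b ∧ b ∈ {v | ∃ i ≤ m, p i = v}) (p (i + d)) (p i) := by
    intro d
    induction d with
    | zero => intro i _; exact .refl
    | succ d ih =>
      intro i hi
      refine Relation.ReflTransGen.head ⟨?_, i + d, by omega, rfl⟩ (ih i (by omega))
      exact ((hp.adj (i + d) (i + (d + 1)) (by omega) hi).2 (by omega)).symm
  rintro _ ⟨i, hi, rfl⟩ _ ⟨j, hj, rfl⟩
  rcases le_total i j with h | h
  · obtain ⟨d, rfl⟩ := Nat.exists_eq_add_of_le h
    exact up d i hj
  · obtain ⟨d, rfl⟩ := Nat.exists_eq_add_of_le h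
    exact down d j hi

lemma exists_indPath {C : Set V} {u v : V} (hu : u ∈ C)
    (h : Relation.ReflTransGen (fun a b => G.Adj a b ∧ b ∈ C) u v) :
    ∃ p n, IndPath G p n ∧ p 0 = u ∧ p n = v ∧ ∀ i ≤ n, p i ∈ C := by
  induction h with
  | refl =>
    refine ⟨fun _ => u, 0, ⟨?_, ?_⟩, rfl, rfl, fun _ _ => hu⟩ <;> intro i j h1 h2 <;> omega
  | @tail b c _ hbc ih =>
    obtain ⟨p, n, hp, h0, hn, hC⟩ := ih
    classical
    have hex : ∃ i, i ≤ n ∧ (p i = c ∨ G.Adj (p i) c) := ⟨n, le_rfl, Or.inr (hn ▸ hbc.1)⟩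
    have hs := Nat.find_spec hex
    have hmin : ∀ j < Nat.find hex, ¬ (j ≤ n ∧ (p j = c ∨ G.Adj (p j) c)) :=
      fun j hj => Nat.find_min hex hj
    generalize Nat.find hex = k at hs hmin
    obtain ⟨hk, hs⟩ := hs
    by_cases hpk : p k = c
    · exact ⟨p, k, hp.take k hk, h0, hpk, fun i hi => hC i (hi.trans hk)⟩
    · have hadj : G.Adj (p k) c := hs.resolve_left hpk
      refine ⟨_, k + 1, (hp.take k hk).snoc c ?_ ?_, ?_, ?_, ?_⟩
      · intro i hi hic
        rcases hi.lt_or_eq with h | h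
        · exact hmin i h ⟨by omega, Or.inl hic⟩
        · exact hpk (h ▸ hic)
      · intro i hi
        constructor
        · intro ha
          by_contra hne
          exact hmin i (by omega) ⟨by omega, Or.inr ha⟩
        · rintro rfl; exact hadj
      · simp [h0]
      · simp
      · intro i hi
        by_cases hik : i ≤ k
        · simp only [hik, if_true]; exact hC i (by omega)
        · simp only [hik, if_false]; exact hbc.2

lemma IndPath.compl_adj {p : ℕ → V} {m : ℕ} (hp : IndPath Gᶜ p m) (i j : ℕ) (hij : i < j)
    (hj : j ≤ m) : G.Adj (p i) (p j) ↔ j ≠ i + 1 := by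
  have h1 := hp.ne i j hij hj
  have h2 := hp.adj i j hij hj
  rw [SimpleGraph.compl_adj] at h2
  tauto

/-- Key lemma (Hayward). -/
lemma attach (hG : NoHole G) (hGc : NoHole Gᶜ) (m : ℕ) :
    ∀ (c : ℕ) (t : ℕ → V) (J H : Set V), J.Finite → J.ncard = c → IndPath Gᶜ t m → Conn G J →
      Conn G H → (∀ a ∈ J, ∀ b ∈ H, a ≠ b ∧ ¬ G.Adj a b) →
      (∀ i ≤ m, ∃ a ∈ J, G.Adj (t i) a) → (∀ i ≤ m, ∃ a ∈ H, G.Adj (t i) a) → H.Finite →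
      ∃ a ∈ J, ∀ i ≤ m, G.Adj (t i) a := by
  induction m with
  | zero =>
    intro c t J H _ _ _ _ _ _ h _ _
    obtain ⟨a, ha, h⟩ := h 0 le_rfl
    refine ⟨a, ha, fun i hi => ?_⟩
    obtain rfl : i = 0 := by omega
    exact h
  | succ m ihm =>
    intro c
    induction c using Nat.strong_induction_on with
    | _ c ihc =>
    intro t J H hJf hJc ht hJ hH hJH htJ htH hHf
    by_contra hcon
    push Not at hcon
    have htJ' : ∀ i ≤ m + 1, ∀ a ∈ J, t i ≠ a := by
      rintro i hi a ha rfl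
      obtain ⟨b, hb, hab⟩ := htH i hi
      exact (hJH _ ha _ hb).2 hab
    have htH' : ∀ i ≤ m + 1, ∀ a ∈ H, t i ≠ a := by
      rintro i hi a ha rfl
      obtain ⟨b, hb, hab⟩ := htJ i hi
      exact (hJH _ hb _ ha).2 hab.symm
    obtain ⟨b, hbJ, hb⟩ := ihm _ t J H hJf rfl (ht.take m (by omega)) hJ hH hJH
      (fun i hi => htJ i (by omega)) (fun i hi => htH i (by omega)) hHf
    obtain ⟨a, haJ, ha⟩ := ihm _ (fun i => t (1 + i)) J H hJf rfl (ht.shift 1 m (by omega)) hJ hH hJH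
      (fun i hi => htJ _ (by omega)) (fun i hi => htH _ (by omega)) hHf
    have ha' : ∀ i, 1 ≤ i → i ≤ m + 1 → G.Adj (t i) a := by
      intro i h1 h2
      have := ha (i - 1) (by omega)
      rwa [show 1 + (i - 1) = i by omega] at this
    have ha0 : ¬ G.Adj (t 0) a := by
      intro h
      obtain ⟨i, hi, hh⟩ := hcon a haJ
      rcases Nat.eq_zero_or_pos i with rfl | h0
      · exact hh h
      · exact hh (ha' i h0 hi)
    have hbm : ¬ G.Adj (t (m + 1)) b := by
      intro h
      obtain ⟨i, hi, hh⟩ := hcon b hbJ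
      rcases hi.lt_or_eq with h0 | rfl
      · exact hh (hb i (by omega))
      · exact hh h
    obtain ⟨q, l, hq, hq0, hql, hqJ⟩ := exists_indPath haJ (hJ a haJ b hbJ)
    have hl : 1 ≤ l := by
      by_contra hl
      obtain rfl : l = 0 := by omega
      rw [← hql, hq0] at hbm
      exact hbm (ha' _ (by omega) le_rfl)
    -- smaller connected sets in `J`
    have small : ∀ J' : Set V, J' ⊆ J → J' ≠ J → Conn G J' →
        (∀ i ≤ m + 1, ∃ a ∈ J', G.Adj (t i) a) → False := by
      intro J' hs hne hc hadj
      have hlt : J'.ncard < J.ncard := Set.ncard_lt_ncard (lt_of_le_of_ne hs hne) hJf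
      obtain ⟨x, hx, hx'⟩ := ihc _ (hJc ▸ hlt) t J' H (hJf.subset hs) rfl ht hc hH
        (fun a ha b hb => hJH a (hs ha) b hb) hadj htH hHf
      obtain ⟨i, hi, hh⟩ := hcon x (hs hx)
      exact hh (hx' i hi)
    have ht0q : ∀ i ≤ l, (G.Adj (q i) (t 0) ↔ i = l) := by
      intro i hi
      constructor
      · intro hadj
        by_contra hne
        refine small {v | ∃ i ≤ l - 1, q i = v} ?_ ?_ (hq.take (l - 1) (by omega)).conn ?_
        · rintro _ ⟨i, hi, rfl⟩; exact hqJ i (by omega)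
        · intro heq
          rw [← heq] at hbJ
          obtain ⟨j, hj, hjb⟩ := hbJ
          exact hq.ne j l (by omega) le_rfl (hjb.trans hql.symm)
        · intro k hk
          rcases Nat.eq_zero_or_pos k with rfl | h0
          · exact ⟨q i, ⟨i, by omega, rfl⟩, hadj.symm⟩
          · exact ⟨q 0, ⟨0, by omega, rfl⟩, hq0 ▸ ha' k h0 hk⟩
      · rintro rfl
        rw [hql]; exact (hb 0 (by omega)).symm
    have htmq : ∀ i ≤ l, (G.Adj (q i) (t (m + 1)) ↔ i = 0) := by
      intro i hi
      constructor
      · intro hadj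
        by_contra hne
        refine small {v | ∃ i ≤ l - 1, q (1 + i) = v} ?_ ?_ (hq.shift 1 (l - 1) (by omega)).conn ?_
        · rintro _ ⟨i, hi, rfl⟩; exact hqJ _ (by omega)
        · intro heq
          rw [← heq] at haJ
          obtain ⟨j, hj, hja⟩ := haJ
          exact hq.ne 0 (1 + j) (by omega) (by omega) (hq0.trans hja.symm)
        · intro k hk
          rcases hk.lt_or_eq with h0 | rfl
          · refine ⟨q l, ⟨l - 1, by omega, ?_⟩, hql ▸ hb k (by omega)⟩
            congr 1; omega
          · refine ⟨q i, ⟨i - 1, by omega, ?_⟩, hadj.symm⟩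
            congr 1; omega
      · rintro rfl
        rw [hq0]; exact (ha' _ (by omega) (by omega)).symm
    have hqt : ∀ i ≤ l, ∀ k ≤ m + 1, q i ≠ t k := fun i hi k hk => (htJ' k hk _ (hqJ i hi)).symm
    have ht0m := ht.compl_adj 0 (m + 1) (by omega) le_rfl
    have ht0m' := ht.ne 0 (m + 1) (by omega) le_rfl
    rcases Nat.eq_zero_or_pos m with rfl | hm
    · -- two nonadjacent vertices
      have hna : ¬ G.Adj (t 0) (t 1) := by simpa using ht0m
      have hR := (hq.snoc (t 0) (fun i hi => hqt i hi 0 (by omega)) ht0q).cons (t 1) (by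
          intro i hi
          by_cases h : i ≤ l
          · simp only [h, if_true]; exact hqt i h 1 (by omega)
          · simp only [h, if_false]; exact ht0m') (by
          intro i hi
          by_cases h : i ≤ l
          · simp only [h, if_true]; exact htmq i h
          · simp only [h, if_false]
            simp only [hna, false_iff]; omega)
      obtain ⟨h1, hh1, hh1'⟩ := htH 1 (by omega)
      obtain ⟨h0, hh0, hh0'⟩ := htH 0 (by omega)
      have hmono : ∀ x y, Relation.ReflTransGen (fun a b => G.Adj a b ∧ b ∈ H) x y →
          Relation.ReflTransGen (fun a b => G.Adj a b ∧ b ∈ H ∪ {t 0, t 1}) x y :=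
        fun x y h => Relation.ReflTransGen.mono (fun a b hab => ⟨hab.1, Or.inl hab.2⟩) _ _ h
      have hreach : Relation.ReflTransGen (fun a b => G.Adj a b ∧ b ∈ H ∪ {t 0, t 1}) (t 1) (t 0) :=
        Relation.ReflTransGen.head ⟨hh1', Or.inl hh1⟩
          ((hmono _ _ (hH h1 hh1 h0 hh0)).tail ⟨hh0'.symm, by simp⟩)
      obtain ⟨r, k, hr, hr0, hrk, hrC⟩ := exists_indPath (by simp) hreach
      have hk0 : k ≠ 0 := by
        rintro rfl
        exact ht0m' (hrk.symm.trans hr0)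
      have hk1 : k ≠ 1 := by
        rintro rfl
        have := (hr.adj 0 1 (by omega) le_rfl).2 rfl
        rw [hr0, hrk] at this
        exact hna this.symm
      have hrH : ∀ j, 0 < j → j < k → r j ∈ H := by
        intro j h1 h2
        rcases hrC j (by omega) with h | h | h
        · exact h
        · exact (hr.ne j k h2 le_rfl (h.trans hrk.symm)).elim
        · exact (hr.ne 0 j h1 (by omega) (hr0.trans h.symm)).elim
      have hRJ : ∀ i, 0 < i → i < l + 1 + 1 →
          (if i = 0 then t 1 else if i - 1 ≤ l then q (i - 1) else t 0) ∈ J := by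
        intro i h1 h2
        rw [if_neg (by omega), if_pos (by omega)]
        exact hqJ _ (by omega)
      refine hG.glue hR hr ?_ ?_ (by omega) (by omega) (by omega) ?_ ?_
      · simp [hr0]
      · simp [hrk]
      · intro i j h1 h2 h3 h4
        exact (hJH _ (hRJ i h1 h2) _ (hrH j h3 h4)).1
      · intro i j h1 h2 h3 h4
        exact (hJH _ (hRJ i h1 h2) _ (hrH j h3 h4)).2
    · have hadj0m : G.Adj (t 0) (t (m + 1)) := ht0m.2 (by omega)
      by_cases hl2 : 2 ≤ l
      · have hR := hq.snoc (t 0) (fun i hi => hqt i hi 0 (by omega)) ht0q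
        refine hG.close hR (t (m + 1)) (by omega) ?_ ?_
        · intro i hi
          by_cases h : i ≤ l
          · simp only [h, if_true]; exact hqt i h _ le_rfl
          · simp only [h, if_false]; exact ht0m'
        · intro i hi
          by_cases h : i ≤ l
          · simp only [h, if_true]; rw [htmq i h]; omega
          · simp only [h, if_false]
            simp only [hadj0m, true_iff]; omega
      · obtain rfl : l = 1 := by omega
        have hab : G.Adj a b := by
          rw [← hq0, ← hql]; exact (hq.adj 0 1 (by omega) le_rfl).2 rfl
        have hP := ht.cons a (fun i hi => htJ' i hi a haJ) (by
          intro i hi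
          rw [SimpleGraph.compl_adj]
          constructor
          · rintro ⟨_, h⟩
            by_contra h0
            exact h (ha' i (by omega) hi)
          · rintro rfl; exact ⟨htJ' _ hi a haJ, ha0⟩)
        by_cases hex : ∃ h ∈ H, ∀ i ≤ m + 1, G.Adj (t i) h
        · obtain ⟨h, hh, hh'⟩ := hex
          have hP2 := hP.snoc b (by
            intro i hi
            by_cases h0 : i = 0
            · simp only [h0, if_true]; exact hab.ne
            · simp only [h0, if_false]; exact htJ' _ (by omega) b hbJ) (by
            intro i hi
            by_cases h0 : i = 0
            · simp only [h0, if_true]; simp [SimpleGraph.compl_adj, hab]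
            · simp only [h0, if_false, SimpleGraph.compl_adj]
              constructor
              · rintro ⟨_, h⟩
                by_contra h1
                exact h (hb _ (by omega))
              · rintro rfl; exact ⟨htJ' _ le_rfl b hbJ, hbm⟩)
          refine hGc.close hP2 h (by omega) ?_ ?_
          · intro i hi
            by_cases h1 : i ≤ m + 1 + 1
            · simp only [h1, if_true]
              by_cases h0 : i = 0
              · simp only [h0, if_true]; exact (hJH a haJ h hh).1
              · simp only [h0, if_false]; exact htH' _ (by omega) h hh
            · simp only [h1, if_false]; exact (hJH b hbJ h hh).1
          · intro i hi
            rw [SimpleGraph.compl_adj]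
            by_cases h1 : i ≤ m + 1 + 1
            · simp only [h1, if_true]
              by_cases h0 : i = 0
              · simp only [h0, if_true]; simpa using hJH a haJ h hh
              · simp only [h0, if_false]
                simp only [hh' (i - 1) (by omega), not_true, and_false, false_iff, false_or]
                omega
            · simp only [h1, if_false]
              simp only [hJH b hbJ h hh, not_false_eq_true, and_true, ne_eq, true_iff]
              omega
        · push Not at hex
          obtain ⟨b', hbH, hb'⟩ := ihm _ t H J hHf rfl (ht.take m (by omega)) hH hJ
            (fun x hx y hy => ⟨(hJH y hy x hx).1.symm, fun h => (hJH y hy x hx).2 h.symm⟩)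
            (fun i hi => htH i (by omega)) (fun i hi => htJ i (by omega)) hJf
          have hbm' : ¬ G.Adj (t (m + 1)) b' := by
            intro h
            obtain ⟨i, hi, hh⟩ := hex b' hbH
            rcases hi.lt_or_eq with h0 | rfl
            · exact hh (hb' i (by omega))
            · exact hh h
          refine hGc.close hP b' (by omega) ?_ ?_
          · intro i hi
            by_cases h0 : i = 0
            · simp only [h0, if_true]; exact (hJH a haJ b' hbH).1
            · simp only [h0, if_false]; exact htH' _ (by omega) b' hbH
          · intro i hi
            rw [SimpleGraph.compl_adj]
            by_cases h0 : i = 0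
            · simp only [h0, if_true]; simpa using hJH a haJ b' hbH
            · simp only [h0, if_false, false_or]
              constructor
              · rintro ⟨_, h⟩
                by_contra h1
                exact h (hb' _ (by omega))
              · rintro rfl; exact ⟨htH' _ le_rfl b' hbH, hbm'⟩

/-- component of `v` in `C` -/
def comp (G : SimpleGraph V) (C : Set V) (v : V) : Set V :=
  {w | Relation.ReflTransGen (fun a b => G.Adj a b ∧ b ∈ C) v w}

lemma comp_subset {C : Set V} {v : V} (hv : v ∈ C) : comp G C v ⊆ C := by
  intro w hw
  rcases Relation.ReflTransGen.cases_tail hw with h | ⟨_, _, h⟩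
  · rwa [h]
  · exact h.2

lemma comp_conn {C : Set V} {v : V} (_hv : v ∈ C) : Conn G (comp G C v) := by
  have h1 : ∀ w ∈ comp G C v,
      Relation.ReflTransGen (fun a b => G.Adj a b ∧ b ∈ comp G C v) v w ∧
      Relation.ReflTransGen (fun a b => G.Adj a b ∧ b ∈ comp G C v) w v := by
    intro w hw
    have hw' : Relation.ReflTransGen (fun a b => G.Adj a b ∧ b ∈ C) v w := hw
    clear hw
    induction hw' with
    | refl => exact ⟨.refl, .refl⟩
    | @tail b c hb hbc ih =>
      exact ⟨ih.1.tail ⟨hbc.1, hb.tail hbc⟩, ih.2.head ⟨hbc.1.symm, hb⟩⟩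
  intro u hu w hw
  exact (h1 u hu).2.trans (h1 w hw).1

/-- handles of the subgraph induced by `U` -/
structure Handle (G : SimpleGraph V) (U H J : Set V) : Prop where
  HU : H ⊆ U
  JU : J ⊆ U
  connH : Conn G H
  connJ : Conn G J
  ne : J.Nonempty
  edge : ∃ x ∈ H, ∃ y ∈ H, G.Adj x y
  anti : ∀ a ∈ J, ∀ b ∈ H, a ≠ b ∧ ¬ G.Adj a b
  nbr : ∀ u ∈ U, u ∉ H → (∃ h ∈ H, G.Adj u h) → ∃ a ∈ J, G.Adj u a

/-- vertices of `U` that miss both `x` and `y` -/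
def far (G : SimpleGraph V) (U : Set V) (x y : V) : Set V :=
  {v ∈ U | v ≠ x ∧ v ≠ y ∧ ¬ G.Adj v x ∧ ¬ G.Adj v y}

/-- vertices of `U` outside the closed neighbourhood of `J` -/
def away (G : SimpleGraph V) (U J : Set V) : Set V :=
  {v ∈ U | v ∉ J ∧ ∀ a ∈ J, ¬ G.Adj v a}

lemma make_handle {U : Set V} {x y z : V} (hx : x ∈ U) (hy : y ∈ U) (hxy : G.Adj x y)
    (hz : z ∈ far G U x y) :
    Handle G U (comp G (away G U (comp G (far G U x y) z)) x) (comp G (far G U x y) z) := by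
  have hJ := comp_subset (G := G) hz
  have hxA : x ∈ away G U (comp G (far G U x y) z) :=
    ⟨hx, fun h => (hJ h).2.1 rfl, fun a ha h => (hJ ha).2.2.2.1 h.symm⟩
  have hyA : y ∈ away G U (comp G (far G U x y) z) :=
    ⟨hy, fun h => (hJ h).2.2.1 rfl, fun a ha h => (hJ ha).2.2.2.2 h.symm⟩
  have hH := comp_subset (G := G) hxA
  refine ⟨fun v hv => (hH hv).1, fun v hv => (hJ hv).1, comp_conn hxA, comp_conn hz,
    ⟨z, .refl⟩, ⟨x, .refl, y, .single ⟨hxy, hyA⟩, hxy⟩, ?_, ?_⟩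
  · intro a ha b hb
    refine ⟨?_, fun h => (hH hb).2.2 a ha h.symm⟩
    rintro rfl
    exact (hH hb).2.1 ha
  · rintro u hu huH ⟨h, hh, huh⟩
    by_contra hcon
    push Not at hcon
    refine huH (Relation.ReflTransGen.tail hh ⟨huh.symm, hu, ?_, hcon⟩)
    intro huJ
    exact (hH hh).2.2 u huJ huh.symm

lemma Handle.smaller {U H J : Set V} (hd : Handle G U H J) {x y n : V} (hx : x ∈ H) (hy : y ∈ H)
    (hxy : G.Adj x y) (hn : n ∈ U) (hnH : n ∉ H) (hnh : ∃ h ∈ H, G.Adj n h)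
    (hnx : ¬ G.Adj n x) (hny : ¬ G.Adj n y) : ∃ H' J', Handle G U H' J' ∧ H' ⊂ H := by
  obtain ⟨j, hj, hnj⟩ := hd.nbr n hn hnH hnh
  have hJfar : J ⊆ far G U x y := fun a ha =>
    ⟨hd.JU ha, (hd.anti a ha x hx).1, (hd.anti a ha y hy).1, (hd.anti a ha x hx).2,
      (hd.anti a ha y hy).2⟩
  have hnfar : n ∈ far G U x y :=
    ⟨hn, fun h => hnH (h ▸ hx), fun h => hnH (h ▸ hy), hnx, hny⟩
  have hJ' : J ⊆ comp G (far G U x y) j := fun a ha =>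
    Relation.ReflTransGen.mono (fun p q h => ⟨h.1, hJfar h.2⟩) _ _ (hd.connJ j hj a ha)
  have hnJ' : n ∈ comp G (far G U x y) j := .single ⟨hnj.symm, hnfar⟩
  have hm := make_handle (hd.HU hx) (hd.HU hy) hxy (hJfar hj)
  refine ⟨_, _, hm, ?_, ?_⟩
  · intro w hw
    have hw' : Relation.ReflTransGen (fun a b => G.Adj a b ∧
      b ∈ away G U (comp G (far G U x y) j)) x w := hw
    clear hw
    induction hw' with
    | refl => exact hx
    | @tail b c _ hbc ih =>
      by_contra hc
      obtain ⟨a, ha, hca⟩ := hd.nbr c hbc.2.1 hc ⟨b, ih, hbc.1.symm⟩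
      exact hbc.2.2.2 a (hJ' ha) hca
  · intro hsub
    obtain ⟨h, hh, hnh⟩ := hnh
    exact (hm.anti n hnJ' h (hsub hh)).2 hnh

lemma core [Finite V] (hG : NoHole G) (hGc : NoHole Gᶜ) (c : ℕ) :
    ∀ U : Set V, U.ncard = c → (∃ x ∈ U, ∃ y ∈ U, G.Adj x y) →
      ∃ x ∈ U, ∃ y ∈ U, G.Adj x y ∧ ∀ p k, IndPath Gᶜ p k → p 0 = x → p k = y →
        (∀ i ≤ k, p i ∈ U) → k < 3 := by
  induction c using Nat.strong_induction_on with
  | _ c ih =>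
  intro U hU ⟨x, hx, y, hy, hxy⟩
  by_cases hex : ∃ k H J, Handle G U H J ∧ H.ncard = k
  · classical
    obtain ⟨H, J, hd, hk⟩ := Nat.find_spec hex
    have hmin : ∀ H' J', Handle G U H' J' → ¬ H' ⊂ H := by
      intro H' J' hd' hlt
      have := Set.ncard_lt_ncard hlt (Set.toFinite H)
      exact Nat.find_min hex (hk ▸ this) ⟨H', J', hd', rfl⟩
    clear hk hxy hx hy x y
    have hHU : H ⊂ U := by
      refine ⟨hd.HU, fun h => ?_⟩
      obtain ⟨j, hj⟩ := hd.ne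
      exact (hd.anti j hj j (h (hd.JU hj))).1 rfl
    obtain ⟨x, hx, y, hy, hxy, hcp⟩ :=
      ih _ (hU ▸ Set.ncard_lt_ncard hHU (Set.toFinite U)) H rfl hd.edge
    refine ⟨x, hd.HU hx, y, hd.HU hy, hxy, ?_⟩
    intro p k hp h0 hk hpU
    by_contra hk3
    have hi : ∃ i ≤ k, p i ∉ H := by
      by_contra hcon
      push Not at hcon
      exact hk3 (hcp p k hp h0 hk hcon)
    obtain ⟨i, hik, hiH⟩ := hi
    have hi0 : 0 < i := Nat.pos_of_ne_zero (by rintro rfl; exact hiH (h0 ▸ hx))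
    have hik' : i < k := lt_of_le_of_ne hik (by rintro rfl; exact hiH (hk ▸ hy))
    have hN : ∀ i ≤ k, p i ∉ H → ∃ h ∈ H, G.Adj (p i) h := by
      intro i hik hiH
      have hi0 : 0 < i := Nat.pos_of_ne_zero (by rintro rfl; exact hiH (h0 ▸ hx))
      have hik' : i < k := lt_of_le_of_ne hik (by rintro rfl; exact hiH (hk ▸ hy))
      have e1 := hp.compl_adj 0 i hi0 hik
      have e2 := hp.compl_adj i k hik' le_rfl
      rw [h0] at e1
      rw [hk] at e2
      by_cases h1 : i = 1
      · exact ⟨y, hy, e2.2 (by omega)⟩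
      · exact ⟨x, hx, (e1.2 (by omega)).symm⟩
    -- first vertex of `H` after `i`
    have hb : ∃ b, i < b ∧ b ≤ k ∧ p b ∈ H := ⟨k, hik', le_rfl, hk ▸ hy⟩
    have hbs := Nat.find_spec hb
    have hbm : ∀ j, i < j → j < Nat.find hb → p j ∉ H := fun j h1 h2 h3 =>
      Nat.find_min hb h2 ⟨h1, by omega, h3⟩
    generalize Nat.find hb = b at hbs hbm
    have ha : ∃ d, d ≤ i ∧ p (i - d) ∈ H := ⟨i, le_rfl, by simpa [h0] using hx⟩
    have has := Nat.find_spec ha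
    have ham : ∀ d < Nat.find ha, p (i - d) ∉ H := fun d h1 h3 =>
      Nat.find_min ha h1 ⟨by omega, h3⟩
    generalize Nat.find ha = d at has ham
    obtain ⟨hib, hbk, hbH⟩ := hbs
    obtain ⟨hdi, haH⟩ := has
    have hd0 : d ≠ 0 := by rintro rfl; exact hiH (by simpa using haH)
    obtain ⟨a, hae⟩ : ∃ a, a = i - d := ⟨_, rfl⟩
    rw [← hae] at haH
    have hmid : ∀ j, a < j → j < b → p j ∉ H := by
      intro j h1 h2
      rcases le_or_gt j i with h | h
      · have := ham (i - j) (by omega)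
        rwa [show i - (i - j) = j by omega] at this
      · exact hbm j h h2
    have hab : G.Adj (p a) (p b) := (hp.compl_adj a b (by omega) hbk).2 (by omega)
    by_cases hb2 : b = a + 2
    · have e1 : ¬ G.Adj (p a) (p (a + 1)) := by
        rw [hp.compl_adj a (a + 1) (by omega) (by omega)]; simp
      have e2 : ¬ G.Adj (p (a + 1)) (p b) := by
        rw [hp.compl_adj (a + 1) b (by omega) (by omega)]; simp; omega
      have hnH := hmid (a + 1) (by omega) (by omega)
      obtain ⟨H', J', hd', hlt⟩ := hd.smaller haH hbH hab (hpU (a + 1) (by omega)) hnH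
        (hN _ (by omega) hnH) (fun h => e1 h.symm) e2
      exact hmin H' J' hd' hlt
    · obtain ⟨j, hj, hjt⟩ := attach hG hGc (b - a - 2) _ (fun i => p (a + 1 + i)) J H
        (Set.toFinite _) rfl (hp.shift (a + 1) (b - a - 2) (by omega)) hd.connJ hd.connH hd.anti
        (fun i hi => hd.nbr _ (hpU _ (by omega)) (hmid _ (by omega) (by omega))
          (hN _ (by omega) (hmid _ (by omega) (by omega))))
        (fun i hi => hN _ (by omega) (hmid _ (by omega) (by omega))) (Set.toFinite _)
      have hjt' : ∀ i, 0 < i → i < b - a → G.Adj (p (a + i)) j := by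
        intro i h1 h2
        have := hjt (i - 1) (by omega)
        rwa [show a + 1 + (i - 1) = a + i by omega] at this
      have hb' : a + (b - a) = b := by omega
      refine hGc.close (hp.shift a (b - a) (by omega)) j (by omega) ?_ ?_
      · intro i hi
        rcases Nat.eq_zero_or_pos i with rfl | h1
        · exact (hd.anti j hj _ haH).1.symm
        · rcases hi.lt_or_eq with h2 | rfl
          · exact (hjt' i h1 h2).ne
          · simp only [hb']; exact (hd.anti j hj _ hbH).1.symm
      · intro i hi
        rw [SimpleGraph.compl_adj]
        rcases Nat.eq_zero_or_pos i with rfl | h1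
        · have := hd.anti j hj _ haH
          simp only [Nat.add_zero, true_or, iff_true]
          exact ⟨this.1.symm, fun h => this.2 h.symm⟩
        · rcases hi.lt_or_eq with h2 | rfl
          · simp only [hjt' i h1 h2, not_true, and_false, false_iff]; omega
          · have := hd.anti j hj _ hbH
            simp only [hb', or_true, iff_true]
            exact ⟨this.1.symm, fun h => this.2 h.symm⟩
  · refine ⟨x, hx, y, hy, hxy, ?_⟩
    intro p k hp h0 hk hpU
    by_contra hk3
    refine hex ⟨_, _, _, make_handle (hpU 0 (by omega)) (hpU 2 (by omega))
      ((hp.compl_adj 0 2 (by omega) (by omega)).2 (by omega)) (z := p 1)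
      ⟨hpU 1 (by omega), (hp.ne 0 1 (by omega) (by omega)).symm, hp.ne 1 2 (by omega) (by omega),
        ?_, ?_⟩, rfl⟩
    · rw [G.adj_comm, hp.compl_adj 0 1 (by omega) (by omega)]; simp
    · rw [hp.compl_adj 1 2 (by omega) (by omega)]; simp

end TwoPairProof

open TwoPairProof in
/-- Every weakly chordal graph that is not complete has a two-pair. -/
theorem weaklyChordal_has_twoPair {V : Type*} [Fintype V] (G : SimpleGraph V)
    (hwc : WeaklyChordal G) (hnc : G ≠ ⊤) :
    ∃ u v, TwoPair G u v := by
  have hedge : ∃ x ∈ (Set.univ : Set V), ∃ y ∈ (Set.univ : Set V), Gᶜ.Adj x y := by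
    by_contra hcon
    push Not at hcon
    apply hnc
    ext x y
    have := hcon x trivial y trivial
    rw [SimpleGraph.compl_adj] at this
    rw [top_adj]
    exact ⟨fun h => h.ne, fun h => by tauto⟩
  obtain ⟨x, -, y, -, hxy, h⟩ := core (G := Gᶜ) hwc.2 (by rw [compl_compl]; exact hwc.1) _
    Set.univ rfl hedge
  rw [compl_compl] at h
  rw [SimpleGraph.compl_adj] at hxy
  refine ⟨x, y, hxy.1, hxy.2, ?_⟩
  rintro l ⟨f, hf0, hfl⟩
  have hcast : ∀ i (hi : i ≤ l), (if h : i < l + 1 then f ⟨i, h⟩ else x) = f ⟨i, by omega⟩ := by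
    intro i hi
    rw [dif_pos]
  have hlt := h (fun i => if h : i < l + 1 then f ⟨i, h⟩ else x) l ⟨?_, ?_⟩ ?_ ?_
    (fun _ _ => trivial)
  · have h0 : l ≠ 0 := by
      rintro rfl
      exact hxy.1 (hf0.symm.trans hfl)
    have h1 : l ≠ 1 := by
      rintro rfl
      apply hxy.2
      rw [← hf0, ← hfl, f.map_adj_iff, pathGraph_adj]
      simp
    omega
  · intro i j hij hj
    simp only [hcast i (by omega), hcast j hj]
    intro he
    have := f.injective he
    simp only [Fin.mk.injEq] at this
    omega
  · intro i j hij hj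
    simp only [hcast i (by omega), hcast j hj]
    rw [f.map_adj_iff, pathGraph_adj]
    simp only
    omega
  · simpa using hf0
  · simp only [hcast l le_rfl]
    exact hfl
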